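/- arXiv:1501.02086 — 2 statements merged into one kernel-verified Lean document; each statement's English description precedes it below -/
import Mathlib

section
/- For every integer p there exists a constant C > 0 such that for all natural numbers N ≥ 2: |∑_{q ∈ ℤ⁴, q₁²+q₂²+q₃²+q₄² ≤ N²} 1/A_p(q)² − (2π²/√5)·log N| ≤ C. (The logarithmic divergence of the one-loop melonic four-point function has coefficient 2π²/√5, where the factor 1/√5 is the square root of the determinant of the quadratic form |q|² + S(q)² on ℝ⁴.) -/
open scoped BigOperators

/-- The gauge-constrained propagator denominator: `A m p q = |q⃗|² + m²` for a momentum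
`q⃗ ∈ ℤ⁶` with one component fixed to `p`, four free components `q`, and the last component
`-(p + S q)` determined by the closure constraint. -/
noncomputable def A (m : ℝ) (p : ℤ) (q : Fin 4 → ℤ) : ℝ :=
  (p : ℝ) ^ 2 + (∑ i, ((q i : ℝ)) ^ 2) + ((p : ℝ) + ∑ i, (q i : ℝ)) ^ 2 + m ^ 2

theorem gauss1 : ∃ C : ℝ, 0 < C ∧ ∀ a b : ℝ, 0 < a → a ≤ 2 →
    Summable (fun n : ℤ => Real.exp (-a * (n + b)^2)) ∧
    |(∑' n : ℤ, Real.exp (-a * (n + b)^2)) - √(Real.pi / a)| ≤ C := by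
  have hsum2 : Summable (fun n : ℤ => 1 / (n:ℝ)^2) := Real.summable_one_div_int_pow.2 (by norm_num)
  have hpi := Real.pi_pos
  refine ⟨1 + ∑' n : ℤ, 1 / (n:ℝ)^2, ?_, ?_⟩
  · have : 0 ≤ ∑' n : ℤ, 1 / (n:ℝ)^2 := tsum_nonneg (fun n => by positivity)
    linarith
  intro a b ha ha2
  constructor
  · have := HurwitzKernelBounds.summable_f_int 0 b (t := a / Real.pi) (by positivity)
    refine this.congr (fun n => ?_)
    simp only [HurwitzKernelBounds.f_int, pow_zero, one_mul]
    congr 1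
    field_simp
  set c : ℝ := Real.pi / a with hc
  have hc0 : 0 < c := by positivity
  have key := Complex.tsum_exp_neg_quadratic (a := (c:ℂ)) (by simpa using hc0) (-Complex.I * b)
  have e1 : ∀ n : ℤ, Complex.exp (-Real.pi / (c:ℂ) * (n + Complex.I * (-Complex.I * b))^2) =
      ((Real.exp (-a * (n + b)^2) : ℝ) : ℂ) := by
    intro n
    push_cast
    congr 1
    rw [hc]
    have h1 : (a:ℂ) ≠ 0 := by exact_mod_cast ha.ne'
    have h2 : (Real.pi:ℂ) ≠ 0 := by exact_mod_cast hpi.ne'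
    push_cast
    have : Complex.I * (-Complex.I * b) = b := by
      linear_combination (-(b:ℂ)) * Complex.I_mul_I
    rw [this]
    field_simp
  have e2 : (c:ℂ) ^ (1/2:ℂ) = ((√c : ℝ) : ℂ) := by
    rw [Real.sqrt_eq_rpow, Complex.ofReal_cpow hc0.le]; norm_num
  simp_rw [e1] at key
  rw [e2, ← Complex.ofReal_tsum] at key
  set S : ℝ := ∑' n : ℤ, Real.exp (-a * (n + b)^2) with hS
  have hsc : 0 < √c := Real.sqrt_pos.2 hc0
  set f : ℤ → ℂ := fun n => Complex.exp (-Real.pi * (c:ℂ) * n^2 + 2 * Real.pi * (-Complex.I * b) * n) with hf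
  have hfn : ∀ n, ‖f n‖ = Real.exp (-Real.pi * c * n^2) := by
    intro n
    rw [hf, Complex.norm_exp]
    congr 1
    have : (-Real.pi * (c:ℂ) * n^2 + 2 * Real.pi * (-Complex.I * b) * n : ℂ) =
      ((-Real.pi * c * n^2 : ℝ) : ℂ) + ((-2 * Real.pi * b * n : ℝ) : ℂ) * Complex.I := by
      push_cast; ring
    rw [this, Complex.add_re, Complex.ofReal_re, Complex.re_ofReal_mul, Complex.I_re, mul_zero, add_zero]
  have hfs : Summable f := by
    apply Summable.of_norm
    simp_rw [hfn]
    have := HurwitzKernelBounds.summable_f_int 0 0 hc0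
    refine this.congr (fun n => ?_)
    simp only [HurwitzKernelBounds.f_int, pow_zero, one_mul]
    congr 1
    ring
  have key' : (S:ℂ) - √c = √c * ((∑' n, f n) - 1) := by
    have : (√c:ℂ) ≠ 0 := by exact_mod_cast hsc.ne'
    rw [key]; field_simp
  have h0 : f 0 = 1 := by simp [hf]
  have hb : ‖(∑' n, f n) - 1‖ ≤ 1 / (Real.pi * c) * ∑' n : ℤ, 1 / (n:ℝ)^2 := by
    rw [hfs.tsum_eq_add_tsum_ite 0, h0, add_sub_cancel_left]
    rw [← tsum_mul_left]
    refine tsum_of_norm_bounded (hsum2.mul_left _).hasSum (fun n => ?_)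
    split_ifs with h
    · simp [h]
    · rw [hfn]
      have hn : 0 < (n:ℝ)^2 := by positivity
      have : 0 < Real.pi * c * n^2 := by positivity
      rw [show -Real.pi * c * n^2 = -(Real.pi * c * n^2) by ring, Real.exp_neg, ← one_div,
        div_mul_div_comm, one_mul]
      apply one_div_le_one_div_of_le this
      linarith [Real.add_one_le_exp (Real.pi * c * n^2)]
  have h3 : |S - √c| = √c * ‖(∑' n, f n) - 1‖ := by
    rw [← Real.norm_eq_abs, ← Complex.norm_real]
    push_cast
    rw [key', norm_mul, Complex.norm_real, Real.norm_of_nonneg hsc.le]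
  rw [h3]
  set Z := ∑' n : ℤ, 1 / (n:ℝ)^2
  have hZ : 0 ≤ Z := tsum_nonneg (fun n => by positivity)
  calc _ ≤ √c * (1 / (Real.pi * c) * Z) := by gcongr
    _ = (√c * (1 / (Real.pi * c))) * Z := by ring
    _ ≤ 1 * Z := by
      gcongr
      have hc1 : 1 ≤ c := by rw [hc, le_div_iff₀ ha]; linarith [Real.pi_gt_three]
      have : √c ≤ c := by rw [Real.sqrt_le_left hc0.le]; nlinarith
      rw [mul_one_div, div_le_one (by positivity)]
      nlinarith [Real.pi_gt_three]
    _ ≤ 1 + Z := by linarith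

set_option maxHeartbeats 400000 in
theorem gaussk (k : ℕ) : ∃ C : ℝ, 0 < C ∧ ∀ r s : ℝ, 0 < r → r ≤ 1 →
    Summable (fun q : Fin k → ℤ => Real.exp (-r^2 * ((∑ i, (q i : ℝ)^2) + (s + ∑ i, (q i : ℝ))^2))) ∧
    |(∑' q : Fin k → ℤ, Real.exp (-r^2 * ((∑ i, (q i : ℝ)^2) + (s + ∑ i, (q i : ℝ))^2)))
      - Real.exp (-r^2 * (s^2 / (k+1))) * ((√Real.pi / r)^k / √(k+1))| ≤ C * (r / r^k) := by
  obtain ⟨C1, hC1, h1⟩ := gauss1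
  have hpi := Real.pi_pos
  induction k with
  | zero =>
    refine ⟨1, one_pos, fun r s hr hr1 => ⟨Summable.of_finite, ?_⟩⟩
    simp [hr.le]
  | succ k ih =>
    obtain ⟨C, hC, ih⟩ := ih
    refine ⟨C * (√Real.pi + C1) + √Real.pi^k * C1, by positivity, fun r s hr hr1 => ?_⟩
    set T : ℝ → ℝ := fun s => ∑' q : Fin k → ℤ, Real.exp (-r^2 * ((∑ i, (q i : ℝ)^2) + (s + ∑ i, (q i : ℝ))^2)) with hT
    have hr2 : 0 < r^2 := by positivity
    have hr21 : r^2 ≤ 1 := by nlinarith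
    set M : ℝ := (√Real.pi / r)^k / √(k+1) with hM
    have hM0 : 0 ≤ M := by positivity
    have hk : (0:ℝ) < k + 1 := by positivity
    have hk2 : (0:ℝ) < k + 2 := by positivity
    -- outer gaussian
    obtain ⟨g1s, g1b⟩ := h1 (r^2) 0 hr2 (by linarith)
    simp only [add_zero] at g1s g1b
    set a : ℝ := r^2 * ((k+2)/(k+1)) with ha
    have ha0 : 0 < a := by positivity
    have ha2 : a ≤ 2 := by
      have : ((k:ℝ)+2)/(k+1) ≤ 2 := by rw [div_le_iff₀ hk]; have : (0:ℝ) ≤ k := by positivity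
                                       linarith
      have h0 : 0 ≤ ((k:ℝ)+2)/(k+1) := by positivity
      rw [ha]; nlinarith
    obtain ⟨g2s, g2b⟩ := h1 a (s/(k+2)) ha0 ha2
    have hsq : ∀ n : ℤ, Real.exp (-r^2 * (n:ℝ)^2) * Real.exp (-r^2 * ((s+n)^2 / (k+1))) =
        Real.exp (-r^2 * (s^2/(k+2))) * Real.exp (-a * (n + s/(k+2))^2) := by
      intro n
      rw [← Real.exp_add, ← Real.exp_add]
      congr 1
      rw [ha]
      field_simp
      ring
    -- factorisation
    have hfac : ∀ x : ℤ × (Fin k → ℤ), Real.exp (-r^2 * ((∑ i, ((Fin.consEquiv (fun _ => ℤ) x i : ℤ) : ℝ)^2) + (s + ∑ i, ((Fin.consEquiv (fun _ => ℤ) x i : ℤ): ℝ))^2)) =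
        Real.exp (-r^2 * (x.1:ℝ)^2) * Real.exp (-r^2 * ((∑ i, (x.2 i : ℝ)^2) + ((s + x.1) + ∑ i, (x.2 i : ℝ))^2)) := by
      intro x
      rw [← Real.exp_add, Fin.sum_univ_succ, Fin.sum_univ_succ]
      simp only [Fin.consEquiv_apply, Fin.cons_zero, Fin.cons_succ]
      congr 1
      ring
    have hTb : ∀ s, |T s - Real.exp (-r^2 * (s^2 / (k+1))) * M| ≤ C * (r / r^k) := fun s => (ih r s hr hr1).2
    set D : ℤ → ℝ := fun n => Real.exp (-r^2 * (n:ℝ)^2) * (T (s+n) - Real.exp (-r^2 * ((s+n)^2 / (k+1))) * M) with hD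
    have hDb : ∀ n, ‖D n‖ ≤ Real.exp (-r^2 * (n:ℝ)^2) * (C * (r / r^k)) := by
      intro n
      rw [hD, norm_mul, Real.norm_of_nonneg (Real.exp_pos _).le]
      exact mul_le_mul_of_nonneg_left (hTb _) (Real.exp_pos _).le
    have hDs : Summable D := Summable.of_norm_bounded (g1s.mul_right _) hDb
    have hDt : ‖∑' n, D n‖ ≤ (∑' n : ℤ, Real.exp (-r^2 * (n:ℝ)^2)) * (C * (r / r^k)) :=
      tsum_of_norm_bounded (g1s.hasSum.mul_right _) hDb
    have hEq : ∀ n : ℤ, Real.exp (-r^2 * (n:ℝ)^2) * T (s+n) = D n +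
        Real.exp (-a * (n + s/(k+2))^2) * (Real.exp (-r^2 * (s^2/(k+2))) * M) := by
      intro n
      simp only [hD]
      linear_combination M * hsq n
    have hs1 : Summable (fun n : ℤ => Real.exp (-r^2 * (n:ℝ)^2) * T (s+n)) := by
      simp_rw [hEq]
      exact hDs.add (g2s.mul_right _)
    have hsP : Summable (fun x : ℤ × (Fin k → ℤ) => Real.exp (-r^2 * (x.1:ℝ)^2) * Real.exp (-r^2 * ((∑ i, (x.2 i : ℝ)^2) + ((s + x.1) + ∑ i, (x.2 i : ℝ))^2))) := by
      rw [summable_prod_of_nonneg (fun x => by positivity)]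
      refine ⟨fun n => ?_, ?_⟩
      · dsimp only
        exact ((ih r (s+n) hr hr1).1).mul_left (Real.exp (-r^2 * (n:ℝ)^2))
      simp_rw [tsum_mul_left]
      exact hs1
    have hval := hsP.tsum_prod
    simp_rw [tsum_mul_left] at hval
    change _ = ∑' n : ℤ, Real.exp (-r^2 * (n:ℝ)^2) * T (s+n) at hval
    simp_rw [hEq] at hval
    rw [hDs.tsum_add (g2s.mul_right _), tsum_mul_right] at hval
    simp_rw [← hfac] at hsP hval
    constructor
    · exact (Equiv.summable_iff (Fin.consEquiv (fun _ => ℤ))).1 hsP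
    rw [← Equiv.tsum_eq (Fin.consEquiv (fun _ : Fin (k+1) => ℤ)), hval]
    have hsqrt : √(Real.pi / a) * M = (√Real.pi / r)^(k+1) / √(k+2) := by
      have e : Real.pi / a = (Real.pi / r^2) * (k+1) / (k+2) := by rw [ha]; field_simp
      have hne : √((k:ℝ)+1) ≠ 0 := (Real.sqrt_pos.2 hk).ne'
      rw [e, Real.sqrt_div (by positivity), Real.sqrt_mul (by positivity), Real.sqrt_div hpi.le, Real.sqrt_sq hr.le, hM, pow_succ]
      field_simp
    have hcast : (((k+1:ℕ):ℝ) + 1) = k + 2 := by push_cast; ring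
    rw [hcast, ← hsqrt]
    set X := ∑' n : ℤ, Real.exp (-a * (n + s/(k+2))^2)
    set Y := ∑' n : ℤ, Real.exp (-r^2 * (n:ℝ)^2)
    set E := Real.exp (-r^2 * (s^2/(k+2)))
    have hE0 : 0 < E := Real.exp_pos _
    have hE1 : E ≤ 1 := Real.exp_le_one_iff.2 (by have : 0 ≤ r^2 * (s^2/(k+2)) := by positivity
                                                  linarith)
    have hY : Y ≤ (√Real.pi + C1) / r := by
      rw [Real.sqrt_div hpi.le, Real.sqrt_sq hr.le] at g1b
      have := (abs_le.1 g1b).2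
      have h3 : C1 ≤ C1 / r := by rw [le_div_iff₀ hr]; nlinarith
      rw [add_div]; linarith
    have hM1 : M ≤ √Real.pi^k / r^k := by
      rw [hM, div_pow]
      apply div_le_self (by positivity)
      rw [Real.one_le_sqrt]
      have : (0:ℝ) ≤ k := by positivity
      linarith
    have e5 : (∑' n, D n) + X * (E * M) - E * (√(Real.pi/a) * M) = (∑' n, D n) + (X - √(Real.pi/a)) * (E * M) := by ring
    rw [e5]
    refine (abs_add_le _ _).trans ?_
    rw [abs_mul, abs_of_nonneg (by positivity : 0 ≤ E * M)]
    have b1 : |∑' n, D n| ≤ C * (√Real.pi + C1) * (r / r^(k+1)) := by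
      calc _ ≤ Y * (C * (r / r^k)) := hDt
        _ ≤ (√Real.pi + C1) / r * (C * (r / r^k)) := by gcongr
        _ = _ := by rw [pow_succ]; field_simp
    have b2 : |X - √(Real.pi/a)| * (E * M) ≤ √Real.pi^k * C1 * (r / r^(k+1)) := by
      calc _ ≤ C1 * (1 * (√Real.pi^k / r^k)) := by gcongr
        _ = _ := by rw [pow_succ]; field_simp
    linarith

theorem theta_bound (m : ℝ) (p : ℤ) : ∃ C : ℝ, 0 < C ∧ ∀ t : ℝ, 0 < t → t ≤ 1 →
    Summable (fun q : Fin 4 → ℤ => Real.exp (-t * A m p q)) ∧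
    |(∑' q : Fin 4 → ℤ, Real.exp (-t * A m p q)) - (Real.pi^2 / √5) / t^2| ≤ C * (√t / t^2) := by
  obtain ⟨C, hC, h⟩ := gaussk 4
  have hpi := Real.pi_pos
  have hc0 : 0 ≤ (p:ℝ)^2 + m^2 + (p:ℝ)^2/5 := by positivity
  refine ⟨C + ((p:ℝ)^2 + m^2 + (p:ℝ)^2/5) * (Real.pi^2 / √5), by positivity, fun t ht ht1 => ?_⟩
  obtain ⟨h1, h2⟩ := h (√t) p (Real.sqrt_pos.2 ht) (Real.sqrt_le_one.2 ht1)
  have hr4 : √t^4 = t^2 := by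
    rw [show √t^4 = (√t^2)^2 by ring, Real.sq_sqrt ht.le]
  have hp4 : √Real.pi^4 = Real.pi^2 := by
    rw [show √Real.pi^4 = (√Real.pi^2)^2 by ring, Real.sq_sqrt hpi.le]
  rw [div_pow, hr4, hp4] at h2
  rw [Real.sq_sqrt ht.le] at h1 h2
  have e : ∀ q : Fin 4 → ℤ, Real.exp (-t * A m p q) = Real.exp (-t * ((p:ℝ)^2 + m^2)) *
      Real.exp (-t * ((∑ i, (q i : ℝ)^2) + (p + ∑ i, (q i : ℝ))^2)) := by
    intro q
    rw [← Real.exp_add, A]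
    congr 1
    ring
  simp_rw [e]
  refine ⟨h1.mul_left _, ?_⟩
  rw [tsum_mul_left]
  set T := ∑' q : Fin 4 → ℤ, Real.exp (-t * ((∑ i, (q i : ℝ)^2) + (p + ∑ i, (q i : ℝ))^2))
  norm_num at h2
  set K := (p:ℝ)^2 + m^2
  set c := K + (p:ℝ)^2/5 with hc
  have hee : Real.exp (-(t * K)) * Real.exp (-(t * ((p:ℝ)^2/5))) = Real.exp (-(t*c)) := by
    rw [← Real.exp_add]; congr 1; rw [hc]; ring
  rw [neg_mul]
  have hE1 : Real.exp (-(t * K)) ≤ 1 := Real.exp_le_one_iff.2 (by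
    have : 0 ≤ t * K := by positivity
    linarith)
  have hl : 1 - t * c ≤ Real.exp (-(t*c)) := by linarith [Real.add_one_le_exp (-(t*c))]
  have hu : Real.exp (-(t*c)) ≤ 1 := Real.exp_le_one_iff.2 (by
    have : 0 ≤ t * c := by positivity
    linarith)
  have hts : t ≤ √t := by rw [Real.le_sqrt' ht]; nlinarith
  have h5 : 0 < √5 := by positivity
  set U := Real.pi^2 / √5 / t^2 with hU
  have hU0 : 0 ≤ U := by positivity
  have hU' : Real.pi^2 / t^2 / √5 = U := by rw [hU]; field_simp
  rw [hU'] at h2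
  have : Real.exp (-(t * K)) * T - U = Real.exp (-(t*K)) * (T - Real.exp (-(t * ((p:ℝ)^2/5))) * U) + (Real.exp (-(t*c)) - 1) * U := by
    rw [← hee]; ring
  rw [this]
  refine (abs_add_le _ _).trans ?_
  rw [abs_mul, abs_mul, abs_of_pos (Real.exp_pos _), abs_of_nonneg hU0, add_mul]
  apply add_le_add
  · calc _ ≤ 1 * (C * (√t / t^2)) := by gcongr
      _ = _ := one_mul _
  · calc _ ≤ (√t * c) * U := by
          gcongr
          rw [abs_le]
          have : t * c ≤ √t * c := by gcongr
          constructor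
          · linarith
          · have : 0 ≤ √t * c := by positivity
            linarith
      _ = _ := by rw [hU]; field_simp

theorem int_lemma {ι : Type*} [Countable ι] (A : ι → ℝ) (hA : ∀ i, 0 < A i) (κ C : ℝ)
    (h : ∀ t : ℝ, 0 < t → t ≤ 1 → Summable (fun i => Real.exp (-t * A i)) ∧
      |(∑' i, Real.exp (-t * A i)) - κ / t^2| ≤ C * (√t / t^2)) (hC : 0 < C) (ε : ℝ) (hε : 0 < ε) (hε1 : ε ≤ 1) :
    ∃ S, HasSum (fun i => (ε / A i + 1 / A i^2) * Real.exp (-ε * A i) -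
      (1 / A i + 1 / A i ^2) * Real.exp (-A i)) S ∧ |S - κ * (-Real.log ε)| ≤ 2 * C := by
  have hb : ∀ i t, t ∈ Set.Icc ε 1 → ‖t * Real.exp (-t * A i)‖ ≤ Real.exp (-ε * A i) := by
    intro i t ht
    have h0 : 0 < t := hε.trans_le ht.1
    rw [norm_mul, Real.norm_of_nonneg h0.le, Real.norm_of_nonneg (Real.exp_pos _).le]
    calc _ ≤ 1 * Real.exp (-ε * A i) := by
          gcongr
          · exact ht.2
          · exact (hA i).le
          · exact ht.1
      _ = _ := one_mul _
  have hcont : ContinuousOn (fun t => ∑' i, t * Real.exp (-t * A i)) (Set.Icc ε 1) :=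
    continuousOn_tsum (fun i => by fun_prop) (h ε hε hε1).1 hb
  have hsub : Set.uIoc ε 1 ⊆ Set.Icc ε 1 := by
    rw [Set.uIoc_of_le hε1]; exact Set.Ioc_subset_Icc_self
  have hS : HasSum (fun i => ∫ t in ε..1, t * Real.exp (-t * A i)) (∫ t in ε..1, ∑' i, t * Real.exp (-t * A i)) := by
    refine intervalIntegral.hasSum_integral_of_dominated_convergence (fun i _ => Real.exp (-ε * A i)) ?_ ?_ ?_ ?_ ?_
    · intro i
      exact (by fun_prop : Continuous fun t : ℝ => t * Real.exp (-t * A i)).aestronglyMeasurable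
    · intro i
      exact Filter.Eventually.of_forall fun t ht => hb i t (hsub ht)
    · exact Filter.Eventually.of_forall fun t ht => (h ε hε hε1).1
    · simp
    · refine Filter.Eventually.of_forall fun t ht => ?_
      have ht := hsub ht
      exact ((h t (hε.trans_le ht.1) ht.2).1.mul_left t).hasSum
  have hint : ∀ i, ∫ t in ε..1, t * Real.exp (-t * A i) = (ε / A i + 1 / A i^2) * Real.exp (-ε * A i) -
      (1 / A i + 1 / A i ^2) * Real.exp (-A i) := by
    intro i
    have hAi := (hA i).ne'
    rw [intervalIntegral.integral_eq_sub_of_hasDerivAt (f := fun t => -((t / A i + 1 / A i^2) * Real.exp (-t * A i)))]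
    · simp only [neg_mul, one_mul]; ring
    · intro t _
      have h1 : HasDerivAt (fun t : ℝ => t / A i + 1 / A i^2) (1 / A i) t :=
        ((hasDerivAt_id t).div_const _).add_const _
      have h2 : HasDerivAt (fun t : ℝ => Real.exp (-t * A i)) (Real.exp (-t * A i) * (-1 * A i)) t :=
        (((hasDerivAt_id t).neg).mul_const (A i)).exp
      have h3 := (h1.mul h2).neg
      have e : -(1 / A i * Real.exp (-t * A i) + (t / A i + 1 / A i ^ 2) * (Real.exp (-t * A i) * (-1 * A i))) = t * Real.exp (-t * A i) := by
        field_simp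
        ring
      rw [e] at h3
      exact h3
    · exact (by fun_prop : Continuous fun t : ℝ => t * Real.exp (-t * A i)).intervalIntegrable _ _
  simp_rw [hint] at hS
  refine ⟨_, hS, ?_⟩
  have hlog : κ * (-Real.log ε) = ∫ t in ε..1, κ * (1 / t) := by
    rw [intervalIntegral.integral_const_mul, integral_one_div_of_pos hε one_pos, one_div, Real.log_inv]
  have hcu : ContinuousOn (fun t : ℝ => κ * (1 / t)) (Set.uIcc ε 1) := by
    rw [Set.uIcc_of_le hε1]
    refine ContinuousOn.mul continuousOn_const (ContinuousOn.div continuousOn_const continuousOn_id ?_)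
    intro t ht; exact (hε.trans_le ht.1).ne'
  rw [hlog, ← intervalIntegral.integral_sub]
  · have hr : ∫ t in ε..1, C * t ^ (-(1/2):ℝ) ≤ 2 * C := by
      rw [intervalIntegral.integral_const_mul, integral_rpow (Or.inl (by norm_num))]
      have : 0 ≤ ε ^ (-(1/2) + 1 : ℝ) := by positivity
      rw [Real.one_rpow]
      norm_num at this ⊢
      nlinarith
    refine le_trans ?_ hr
    rw [← Real.norm_eq_abs]
    refine intervalIntegral.norm_integral_le_of_norm_le hε1 (Filter.Eventually.of_forall fun t ht => ?_) ?_
    · have h0 : 0 < t := hε.trans ht.1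
      have := (h t h0 ht.2).2
      rw [tsum_mul_left, show t * (∑' i, Real.exp (-t * A i)) - κ * (1 / t) = t * ((∑' i, Real.exp (-t * A i)) - κ / t^2) by field_simp,
        norm_mul, Real.norm_of_nonneg h0.le, Real.norm_eq_abs]
      refine (mul_le_mul_of_nonneg_left this h0.le).trans (le_of_eq ?_)
      rw [Real.rpow_neg h0.le, ← Real.sqrt_eq_rpow]
      have hs : √t ≠ 0 := (Real.sqrt_pos.2 h0).ne'
      have := Real.sq_sqrt h0.le
      field_simp
      exact this
    · apply IntervalIntegrable.const_mul
      exact intervalIntegral.intervalIntegrable_rpow' (by norm_num)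
  · apply ContinuousOn.intervalIntegrable
    rwa [Set.uIcc_of_le hε1]
  · exact hcu.intervalIntegrable

theorem term_bound (a ε K m2 : ℝ) (N2 : ℝ) (hm : 0 < m2) (hma : m2 ≤ a) (hN : 0 < N2) (hε : ε = 1 / N2) (P : Prop) [Decidable P]
    (h1 : P → a ≤ K * N2) (h2 : ¬ P → N2 ≤ a) :
    |(if P then 1 / a^2 else 0) - ((ε / a + 1 / a^2) * Real.exp (-ε * a) -
      (1 / a + 1 / a ^2) * Real.exp (-a))| ≤ (2 + Real.exp K) * (ε^2 * Real.exp (-ε * a)) +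
      (1 / m2 + 1 / m2^2) * Real.exp (-1 * a) := by
  have ha : 0 < a := hm.trans_le hma
  have hε0 : 0 < ε := by rw [hε]; positivity
  have hX : 0 < Real.exp (-ε * a) := Real.exp_pos _
  have hZ : (1 / a + 1 / a^2) * Real.exp (-a) ≤ (1 / m2 + 1 / m2^2) * Real.exp (-1 * a) := by
    rw [neg_one_mul]; gcongr
  have hZ0 : 0 ≤ (1 / a + 1 / a^2) * Real.exp (-a) := by positivity
  set Z := (1 / a + 1 / a^2) * Real.exp (-a)
  have hK := Real.exp_pos K
  split_ifs with h
  · have hu : ε * a ≤ K := by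
      rw [hε, one_div_mul_eq_div, div_le_iff₀ hN]; exact h1 h
    have hE : 1 ≤ Real.exp K * Real.exp (-ε * a) := by
      rw [← Real.exp_add]; apply Real.one_le_exp; linarith
    have hlow : (1 - ε * a) ≤ Real.exp (-ε * a) := by linarith [Real.add_one_le_exp (-ε * a)]
    have hup : Real.exp (-ε * a) * (1 + ε * a) ≤ 1 := by
      rw [neg_mul, Real.exp_neg, inv_mul_le_one₀ (Real.exp_pos _)]
      linarith [Real.add_one_le_exp (ε * a)]
    have e1 : 1 / a^2 - ((ε / a + 1 / a^2) * Real.exp (-ε * a) - Z) =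
      (1 - Real.exp (-ε * a) * (1 + ε * a)) / a^2 + Z := by field_simp; ring
    rw [e1, abs_of_nonneg (by have : 0 ≤ 1 - Real.exp (-ε * a) * (1 + ε * a) := by linarith
                              positivity)]
    have e2 : (1 - Real.exp (-ε * a) * (1 + ε * a)) / a^2 ≤ ε^2 := by
      rw [div_le_iff₀ (by positivity)]
      have : (1 - ε * a) * (1 + ε * a) ≤ Real.exp (-ε * a) * (1 + ε * a) := by gcongr
      nlinarith
    have e3 : ε^2 ≤ (2 + Real.exp K) * (ε^2 * Real.exp (-ε * a)) := by
      have : ε^2 * 1 ≤ ε^2 * (Real.exp K * Real.exp (-ε * a)) := by gcongr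
      have : 0 ≤ ε^2 * Real.exp (-ε * a) := by positivity
      nlinarith
    linarith
  · have h3 : 1 / a ≤ ε := by rw [hε]; exact one_div_le_one_div_of_le hN (h2 h)
    have h4 : ε / a + 1 / a^2 ≤ 2 * ε^2 := by
      have h5 : 0 < 1 / a := by positivity
      have : ε / a + 1 / a^2 = ε * (1 / a) + (1/a) * (1 / a) := by field_simp
      rw [this]; nlinarith
    have h6 : (ε / a + 1 / a^2) * Real.exp (-ε * a) ≤ 2 * ε^2 * Real.exp (-ε * a) := by gcongr
    have h7 : 0 ≤ (ε / a + 1 / a^2) * Real.exp (-ε * a) := by positivity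
    have h8 : 0 ≤ Real.exp K * (ε^2 * Real.exp (-ε * a)) := by positivity
    rw [abs_le]
    constructor <;> nlinarith

/-- The logarithmic divergence of the one-loop melonic four-point function has
coefficient `2π²/√5`. -/
theorem four_point_log_divergence (m : ℝ) (hm : 0 < m) (p : ℤ) :
    ∃ C : ℝ, 0 < C ∧ ∀ N : ℕ, 2 ≤ N →
      |(∑' q : {q : Fin 4 → ℤ // (∑ i, (q i) ^ 2) ≤ (N : ℤ) ^ 2}, 1 / (A m p q.1) ^ 2) -
        (2 * Real.pi ^ 2 / Real.sqrt 5) * Real.log N| ≤ C := by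
  obtain ⟨C, hC, h⟩ := theta_bound m p
  have hpi := Real.pi_pos
  have hAm : ∀ q, m^2 ≤ A m p q := by
    intro q
    have : 0 ≤ (p : ℝ) ^ 2 + (∑ i, ((q i : ℝ)) ^ 2) + ((p : ℝ) + ∑ i, (q i : ℝ)) ^ 2 := by positivity
    rw [A]; linarith
  have hm2 : 0 < m^2 := by positivity
  have hA : ∀ q, 0 < A m p q := fun q => hm2.trans_le (hAm q)
  set κ := Real.pi^2 / √5 with hκ
  set K : ℝ := 3 * (p:ℝ)^2 + 9 + m^2 with hK
  set C2 : ℝ := 1 / m^2 + 1 / (m^2)^2 with hC2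
  have hκ0 : 0 < κ := by positivity
  have hC20 : 0 < C2 := by positivity
  have hEK := Real.exp_pos K
  refine ⟨2 * C + ((2 + Real.exp K) * (κ + C) + C2 * (κ + C)), by positivity, fun N hN => ?_⟩
  have hN2 : (2:ℝ) ≤ N := by exact_mod_cast hN
  set ε : ℝ := 1 / (N:ℝ)^2 with hε
  have hN0 : (0:ℝ) < (N:ℝ)^2 := by positivity
  have hε0 : 0 < ε := by positivity
  have hε1 : ε ≤ 1 := by rw [hε, div_le_one hN0]; nlinarith
  obtain ⟨S, hS, hSb⟩ := int_lemma (A m p) hA κ C h hC ε hε0 hε1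
  have hlog : κ * (-Real.log ε) = (2 * Real.pi ^ 2 / Real.sqrt 5) * Real.log N := by
    rw [hε, one_div, Real.log_inv, Real.log_pow, hκ]; push_cast; ring
  rw [hlog] at hSb
  -- theta upper bound
  have hth : ∀ t : ℝ, 0 < t → t ≤ 1 → t^2 * (∑' q, Real.exp (-t * A m p q)) ≤ κ + C := by
    intro t ht ht1
    have h1 := (abs_le.1 (h t ht ht1).2).2
    have h2 : √t ≤ 1 := Real.sqrt_le_one.2 ht1
    have h3 : t^2 * ((∑' q, Real.exp (-t * A m p q)) - κ / t^2) ≤ t^2 * (C * (√t / t^2)) := by gcongr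
    have h4 : t^2 * ((∑' q, Real.exp (-t * A m p q)) - κ / t^2) = t^2 * (∑' q, Real.exp (-t * A m p q)) - κ := by field_simp
    have h5 : t^2 * (C * (√t / t^2)) = C * √t := by field_simp
    have h6 : C * √t ≤ C * 1 := by gcongr
    linarith
  classical
  set f : (Fin 4 → ℤ) → ℝ := fun q => if (∑ i, (q i) ^ 2) ≤ (N : ℤ) ^ 2 then 1 / (A m p q)^2 else 0 with hf
  have hsub : (∑' q : {q : Fin 4 → ℤ // (∑ i, (q i) ^ 2) ≤ (N : ℤ) ^ 2}, 1 / (A m p q.1) ^ 2) = ∑' q, f q := by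
    have := tsum_subtype {q : Fin 4 → ℤ | (∑ i, (q i) ^ 2) ≤ (N : ℤ) ^ 2} (fun q => 1 / (A m p q) ^ 2)
    refine Eq.trans this ?_
    refine tsum_congr fun q => ?_
    simp only [hf, Set.indicator_apply, Set.mem_setOf_eq]
  set g : (Fin 4 → ℤ) → ℝ := fun q => (ε / A m p q + 1 / A m p q^2) * Real.exp (-ε * A m p q) -
      (1 / A m p q + 1 / A m p q ^2) * Real.exp (-A m p q) with hg
  have hb : ∀ q, ‖f q - g q‖ ≤ (2 + Real.exp K) * (ε^2 * Real.exp (-ε * A m p q)) + C2 * Real.exp (-1 * A m p q) := by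
    intro q
    refine term_bound (A m p q) ε K (m^2) ((N:ℝ)^2) hm2 (hAm q) hN0 hε _ ?_ ?_
    · intro hq
      have hq' : (∑ i, (q i : ℝ)^2) ≤ (N:ℝ)^2 := by exact_mod_cast hq
      have hcs : (∑ i, (q i : ℝ))^2 ≤ 4 * ∑ i, (q i : ℝ)^2 := by
        simpa using sq_sum_le_card_mul_sum_sq (s := Finset.univ) (f := fun i => (q i : ℝ))
      have hN1 : 1 ≤ (N:ℝ)^2 := by nlinarith
      rw [A, hK]
      have h7 : ((p:ℝ) + ∑ i, (q i : ℝ))^2 ≤ 2 * (p:ℝ)^2 + 2 * (∑ i, (q i : ℝ))^2 := by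
        nlinarith [sq_nonneg ((p:ℝ) - ∑ i, (q i : ℝ))]
      have h8 : (3 * (p:ℝ)^2 + m^2) * 1 ≤ (3 * (p:ℝ)^2 + m^2) * (N:ℝ)^2 := by gcongr
      nlinarith
    · intro hq
      have hq' : (N:ℝ)^2 < (∑ i, (q i : ℝ)^2) := by
        have := not_le.1 hq
        exact_mod_cast this
      rw [A]
      nlinarith [sq_nonneg (p:ℝ), sq_nonneg ((p:ℝ) + ∑ i, (q i : ℝ))]
  have s1 := (h ε hε0 hε1).1
  have s2 := (h 1 one_pos le_rfl).1
  have hB := ((s1.hasSum.mul_left (ε^2)).mul_left (2 + Real.exp K)).add (s2.hasSum.mul_left C2)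
  have hd := tsum_of_norm_bounded hB hb
  have hds : Summable (fun q => f q - g q) := Summable.of_norm_bounded hB.summable hb
  have hfsum : ∑' q, f q = (∑' q, (f q - g q)) + S := by
    have h9 := hds.hasSum.add hS
    have : HasSum f ((∑' q, (f q - g q)) + S) := by
      refine h9.congr_fun ?_ |> id
      intro q; simp [hg]
    exact this.tsum_eq
  rw [hsub, hfsum, add_sub_assoc]
  refine (abs_add_le _ _).trans ?_
  have t1 := hth ε hε0 hε1
  have t2 := hth 1 one_pos le_rfl
  rw [one_pow, one_mul] at t2
  have t3 : (2 + Real.exp K) * (ε^2 * ∑' q, Real.exp (-ε * A m p q)) ≤ (2 + Real.exp K) * (κ + C) := by gcongr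
  have t4 : C2 * (∑' q, Real.exp (-1 * A m p q)) ≤ C2 * (κ + C) := by gcongr
  rw [Real.norm_eq_abs] at hd
  linarith
end

section
/- For every integer p there exists a constant C > 0 such that for all real Λ ≥ 2: |∫_{1/Λ²}^{∞} α·e^{−αm²}·(∑_{q ∈ ℤ⁴} e^{−α(p² + q₁²+q₂²+q₃²+q₄² + (p+S(q))²)}) dα − (2π²/√5)·log Λ| ≤ C. (This is the asymptotic expansion, in the Schwinger-parametric cutoff Λ, of the one-loop melonic four-point bubble of the model: it diverges logarithmically with coefficient 2π²/√5.) -/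
open MeasureTheory
open scoped BigOperators

namespace FourPt

lemma summable_sq : Summable (fun n : ℤ => 1 / (n : ℝ) ^ 2) :=
  Real.summable_one_div_int_pow.mpr one_lt_two

lemma exp_neg_le_inv {x : ℝ} (hx : 0 < x) : Real.exp (-x) ≤ 1 / x := by
  rw [Real.exp_neg, ← one_div]
  apply one_div_le_one_div_of_le hx
  linarith [Real.add_one_le_exp x]

lemma summable_gauss {c : ℝ} (hc : 0 < c) (b : ℝ) :
    Summable (fun n : ℤ => Real.exp (-c * ((n : ℝ) + b) ^ 2)) := by
  have h1 : Summable (fun n : ℤ => Real.exp (c * b ^ 2) *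
      ((if n = 0 then (1:ℝ) else 0) + (2 / c) * (1 / (n : ℝ) ^ 2))) := by
    apply Summable.mul_left
    exact (hasSum_ite_eq (0 : ℤ) (1 : ℝ)).summable.add (summable_sq.mul_left _)
  refine Summable.of_nonneg_of_le (fun n => (Real.exp_pos _).le) (fun n => ?_) h1
  have h2 : Real.exp (-c * ((n : ℝ) + b) ^ 2) ≤
      Real.exp (c * b ^ 2) * Real.exp (-(c / 2 * (n : ℝ) ^ 2)) := by
    rw [← Real.exp_add]
    apply Real.exp_le_exp.mpr
    nlinarith [mul_nonneg hc.le (sq_nonneg ((n : ℝ) + 2 * b))]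
  refine h2.trans (mul_le_mul_of_nonneg_left ?_ (Real.exp_pos _).le)
  by_cases hn : n = 0
  · simp [hn]
  · have hn' : (0:ℝ) < (n : ℝ) ^ 2 := by
      have : (n : ℝ) ≠ 0 := by exact_mod_cast hn
      positivity
    have := exp_neg_le_inv (x := c / 2 * (n : ℝ) ^ 2) (by positivity)
    rw [if_neg hn, zero_add]
    refine this.trans (le_of_eq ?_)
    field_simp

lemma theta_bound : ∃ K : ℝ, 0 ≤ K ∧ ∀ c : ℝ, 0 < c → ∀ b : ℝ,
    |(∑' n : ℤ, Real.exp (-c * ((n : ℝ) + b) ^ 2)) - Real.sqrt (Real.pi / c)|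
      ≤ K * Real.sqrt (Real.pi / c) * c := by
  refine ⟨(1 / Real.pi ^ 2) * ∑' n : ℤ, 1 / (n : ℝ) ^ 2, ?_, ?_⟩
  · exact mul_nonneg (by positivity) (tsum_nonneg fun n => by positivity)
  intro c hc b
  have hpi := Real.pi_pos
  have ha : 0 < Real.pi / c := by positivity
  set a : ℝ := Real.pi / c with ha_def
  set f : ℤ → ℂ := fun n => Complex.exp (-Real.pi * (a:ℂ) * n ^ 2
    + 2 * Real.pi * (-Complex.I * b) * n) with hf
  have hP := Complex.tsum_exp_neg_quadratic (a := (a : ℂ)) (by simpa using ha) (-Complex.I * b)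
  have hs : ((a : ℂ) ^ (1 / 2 : ℂ)) = ((Real.sqrt a : ℝ) : ℂ) := by
    rw [Real.sqrt_eq_rpow, Complex.ofReal_cpow ha.le]; norm_num
  have hR : (∑' n : ℤ, Complex.exp (-Real.pi / (a:ℂ) * (n + Complex.I * (-Complex.I * b)) ^ 2))
      = ((∑' n : ℤ, Real.exp (-c * ((n : ℝ) + b) ^ 2) : ℝ) : ℂ) := by
    rw [Complex.ofReal_tsum]
    refine tsum_congr fun n => ?_
    rw [Complex.ofReal_exp]
    congr 1
    have h1 : Complex.I * (-Complex.I * b) = b := by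
      rw [← mul_assoc]; simp
    have h2 : -(Real.pi : ℂ) / (a : ℂ) = -c := by
      have hpc : (Real.pi : ℂ) ≠ 0 := by exact_mod_cast hpi.ne'
      have hcc : (c : ℂ) ≠ 0 := by exact_mod_cast hc.ne'
      rw [ha_def]; push_cast; field_simp
    rw [h1, h2]; push_cast; ring
  rw [hs, hR] at hP
  set T : ℝ := ∑' n : ℤ, Real.exp (-c * ((n : ℝ) + b) ^ 2)
  have hsa : 0 < Real.sqrt a := Real.sqrt_pos.mpr ha
  have hbd : ∀ n : ℤ, ‖f n - (if n = 0 then (1:ℂ) else 0)‖ ≤ c / Real.pi ^ 2 * (1 / (n : ℝ) ^ 2) := by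
    intro n
    by_cases hn : n = 0
    · simp [hn, hf]
    · rw [if_neg hn, sub_zero]
      have hn' : (0:ℝ) < (n : ℝ) ^ 2 := by
        have : (n : ℝ) ≠ 0 := by exact_mod_cast hn
        positivity
      have h1 : ‖f n‖ = Real.exp (-(Real.pi * a * (n:ℝ) ^ 2)) := by
        rw [hf]
        simp only
        rw [Complex.norm_exp]
        congr 1
        have : (-Real.pi * (a:ℂ) * n ^ 2 + 2 * Real.pi * (-Complex.I * b) * n)
          = ((-(Real.pi * a * (n:ℝ) ^ 2) : ℝ) : ℂ) + ((-(2 * Real.pi * b * n) : ℝ) : ℂ) * Complex.I := by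
          push_cast; ring
        rw [this]
        simp [-Complex.ofReal_neg, -Complex.ofReal_mul, -Complex.ofReal_pow]
      rw [h1]
      refine (exp_neg_le_inv (by positivity)).trans (le_of_eq ?_)
      rw [ha_def]; field_simp
  have hsum : HasSum (fun n : ℤ => c / Real.pi ^ 2 * (1 / (n : ℝ) ^ 2))
      (c / Real.pi ^ 2 * ∑' n : ℤ, 1 / (n : ℝ) ^ 2) := summable_sq.hasSum.mul_left _
  have hdiff : Summable (fun n : ℤ => f n - (if n = 0 then (1:ℂ) else 0)) :=
    Summable.of_norm_bounded hsum.summable hbd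
  have hδ := hasSum_ite_eq (0 : ℤ) (1 : ℂ)
  have hfs : Summable f := by
    have := hdiff.add hδ.summable
    simpa using this
  have hnorm := tsum_of_norm_bounded hsum hbd
  rw [hfs.tsum_sub hδ.summable, hδ.tsum_eq, hP] at hnorm
  have h3 : (1 / ((Real.sqrt a : ℝ) : ℂ) * (T : ℂ) - 1) = ((T / Real.sqrt a - 1 : ℝ) : ℂ) := by
    push_cast; ring
  rw [h3, Complex.norm_real, Real.norm_eq_abs] at hnorm
  have h4 : T - Real.sqrt a = Real.sqrt a * (T / Real.sqrt a - 1) := by field_simp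
  rw [h4, abs_mul, abs_of_pos hsa]
  calc _ ≤ Real.sqrt a * (c / Real.pi ^ 2 * ∑' n : ℤ, 1 / (n : ℝ) ^ 2) := by gcongr
    _ = _ := by ring

noncomputable def HH (α : ℝ) (n : ℕ) (x : ℝ) : ℝ :=
  ∑' q : Fin n → ℤ, Real.exp (-α * ((∑ i, (q i : ℝ) ^ 2) + (x + ∑ i, (q i : ℝ)) ^ 2))

lemma summable_pi {α : ℝ} (hα : 0 < α) (n : ℕ) :
    Summable (fun q : Fin n → ℤ => Real.exp (-α * ∑ i, (q i : ℝ) ^ 2)) := by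
  induction n with
  | zero => exact Summable.of_finite
  | succ n ih =>
    rw [← (Fin.consEquiv (fun _ : Fin (n+1) => ℤ)).summable_iff]
    have h0 : Summable (fun k : ℤ => Real.exp (-α * (k : ℝ) ^ 2)) := by
      simpa using summable_gauss hα 0
    have := h0.mul_of_nonneg ih (fun _ => (Real.exp_pos _).le) (fun _ => (Real.exp_pos _).le)
    refine this.congr fun q => ?_
    simp only [Function.comp, Fin.consEquiv_apply, Fin.sum_univ_succ, Fin.cons_zero, Fin.cons_succ]
    rw [← Real.exp_add]; congr 1; ring

lemma summable_HH {α : ℝ} (hα : 0 < α) (n : ℕ) (x : ℝ) :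
    Summable (fun q : Fin n → ℤ =>
      Real.exp (-α * ((∑ i, (q i : ℝ) ^ 2) + (x + ∑ i, (q i : ℝ)) ^ 2))) := by
  refine Summable.of_nonneg_of_le (fun q => (Real.exp_pos _).le) (fun q => ?_) (summable_pi hα n)
  apply Real.exp_le_exp.mpr
  nlinarith [mul_nonneg hα.le (sq_nonneg (x + ∑ i, (q i : ℝ)))]

lemma HH_zero (α x : ℝ) : HH α 0 x = Real.exp (-α * x ^ 2) := by
  simp [HH, tsum_fintype]

lemma HH_nonneg (α : ℝ) (n : ℕ) (x : ℝ) : 0 ≤ HH α n x :=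
  tsum_nonneg fun _ => (Real.exp_pos _).le

lemma HH_succ {α : ℝ} (hα : 0 < α) (n : ℕ) (x : ℝ) :
    HH α (n + 1) x = ∑' k : ℤ, Real.exp (-α * (k : ℝ) ^ 2) * HH α n (x + k) ∧
    Summable (fun k : ℤ => Real.exp (-α * (k : ℝ) ^ 2) * HH α n (x + k)) := by
  have hS := summable_HH hα (n + 1) x
  rw [← (Fin.consEquiv (fun _ : Fin (n+1) => ℤ)).summable_iff] at hS
  have key : ∀ k : ℤ, (∑' q : Fin n → ℤ, ((fun q : Fin (n+1) → ℤ =>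
      Real.exp (-α * ((∑ i, (q i : ℝ) ^ 2) + (x + ∑ i, (q i : ℝ)) ^ 2))) ∘
      (Fin.consEquiv (fun _ : Fin (n+1) => ℤ))) (k, q)) =
      Real.exp (-α * (k : ℝ) ^ 2) * HH α n (x + k) := by
    intro k
    rw [HH, ← tsum_mul_left]
    refine tsum_congr fun q => ?_
    simp only [Function.comp, Fin.consEquiv_apply, Fin.sum_univ_succ, Fin.cons_zero, Fin.cons_succ]
    rw [← Real.exp_add]; congr 1; ring
  constructor
  · rw [HH, ← (Fin.consEquiv (fun _ : Fin (n+1) => ℤ)).tsum_eq]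
    exact hS.tsum_prod.trans (tsum_congr key)
  · exact hS.prod.congr key

lemma HH_bound (n : ℕ) : ∃ C : ℝ, 0 ≤ C ∧ ∀ α : ℝ, 0 < α → α ≤ 1 → ∀ x : ℝ,
    |HH α n x - Real.sqrt (Real.pi / α) ^ n / Real.sqrt (n + 1) * Real.exp (-α * x ^ 2 / (n + 1))|
      ≤ C * α * Real.sqrt (Real.pi / α) ^ n * Real.exp (-α * x ^ 2 / (n + 1)) := by
  obtain ⟨K, hK, hθ⟩ := theta_bound
  induction n with
  | zero => exact ⟨0, le_rfl, fun α _ _ x => by simp [HH_zero]⟩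
  | succ n ih =>
    obtain ⟨C, hC, ih⟩ := ih
    refine ⟨C * (1 + 2 * K) + 2 * K, by positivity, fun α hα hα1 x => ?_⟩
    have hn : (0:ℝ) < (n:ℝ) + 1 := by positivity
    have hn2 : (0:ℝ) < (n:ℝ) + 2 := by positivity
    obtain ⟨hH, hHs⟩ := HH_succ hα n x
    set r := Real.sqrt (Real.pi / α) with hr
    set c := α * (n + 2) / (n + 1) with hc
    have hcpos : 0 < c := by positivity
    set b := x / (n + 2) with hb
    have hT := hθ c hcpos b
    have hTs := summable_gauss hcpos b
    set T := ∑' k : ℤ, Real.exp (-c * ((k : ℝ) + b) ^ 2) with hTdef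
    set s := Real.sqrt (Real.pi / c) with hs
    set e := Real.exp (-α * x ^ 2 / (n + 2)) with he
    have hcast : ((n + 1 : ℕ) : ℝ) + 1 = n + 2 := by push_cast; ring
    rw [hcast]
    have hsq : ∀ k : ℤ, Real.exp (-α * (k : ℝ) ^ 2) * Real.exp (-α * (x + k) ^ 2 / (n + 1))
        = e * Real.exp (-c * ((k : ℝ) + b) ^ 2) := by
      intro k
      rw [he, ← Real.exp_add, ← Real.exp_add]
      congr 1
      rw [hc, hb]; field_simp; ring
    have hrpos : 0 < r := Real.sqrt_pos.mpr (div_pos Real.pi_pos hα)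
    have hspos : 0 < s := Real.sqrt_pos.mpr (div_pos Real.pi_pos hcpos)
    have hepos : 0 < e := Real.exp_pos _
    set M := r ^ n / Real.sqrt (n + 1) with hM
    have hMpos : 0 < M := div_pos (pow_pos hrpos n) (Real.sqrt_pos.mpr hn)
    have hdiff : |HH α (n + 1) x - M * (e * T)| ≤ C * α * r ^ n * (e * T) := by
      have h1 : HasSum (fun k : ℤ => C * α * r ^ n * (e * Real.exp (-c * ((k : ℝ) + b) ^ 2)))
          (C * α * r ^ n * (e * T)) := (hTs.hasSum.mul_left e).mul_left _
      have h2 : HasSum (fun k : ℤ => M * (e * Real.exp (-c * ((k : ℝ) + b) ^ 2)))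
          (M * (e * T)) := (hTs.hasSum.mul_left e).mul_left _
      rw [hH, ← h2.tsum_eq, ← hHs.tsum_sub h2.summable, ← Real.norm_eq_abs]
      refine tsum_of_norm_bounded h1 fun k => ?_
      have h3 := ih α hα hα1 (x + k)
      rw [← hsq k, Real.norm_eq_abs]
      have h4 : Real.exp (-α * (k : ℝ) ^ 2) * HH α n (x + k) -
          M * (Real.exp (-α * (k : ℝ) ^ 2) * Real.exp (-α * (x + k) ^ 2 / (n + 1))) =
          Real.exp (-α * (k : ℝ) ^ 2) * (HH α n (x + k) -
            M * Real.exp (-α * (x + k) ^ 2 / (n + 1))) := by ring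
      rw [h4, abs_mul, abs_of_pos (Real.exp_pos _)]
      calc _ ≤ Real.exp (-α * (k : ℝ) ^ 2) * (C * α * r ^ n * Real.exp (-α * (x + k) ^ 2 / (n + 1))) := by
            gcongr
        _ = _ := by ring
    have hcα : α ≤ c := by
      rw [hc, le_div_iff₀ hn]; nlinarith
    have hc2 : c ≤ 2 * α := by
      rw [hc, div_le_iff₀ hn]; nlinarith [mul_nonneg hα.le (Nat.cast_nonneg (α := ℝ) n)]
    have hsr : s ≤ r := Real.sqrt_le_sqrt (div_le_div_of_nonneg_left Real.pi_pos.le hα hcα)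
    have hMs : M * s = r ^ (n + 1) / Real.sqrt (n + 2) := by
      have : s = r * Real.sqrt (n + 1) / Real.sqrt (n + 2) := by
        rw [hs, hr, ← Real.sqrt_mul (by positivity), ← Real.sqrt_div (by positivity)]
        congr 1; rw [hc]; field_simp
      have h1 : Real.sqrt ((n:ℝ) + 1) ≠ 0 := (Real.sqrt_pos.mpr hn).ne'
      rw [this, hM]; field_simp; ring
    have hMr : M ≤ r ^ n := by
      rw [hM]
      apply div_le_self (by positivity)
      rw [Real.one_le_sqrt]; linarith [Nat.cast_nonneg (α := ℝ) n]
    have hTle : T ≤ r * (1 + 2 * K) := by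
      have h1 := (abs_le.mp hT).2
      have h2 : K * s * c ≤ K * r * 2 := by
        have : c ≤ 2 := by linarith
        gcongr
      linarith
    have hTs' : |T - s| ≤ K * r * (2 * α) := hT.trans (by gcongr)
    rw [← hMs]
    calc |HH α (n + 1) x - M * s * e| = |(HH α (n + 1) x - M * (e * T)) + M * e * (T - s)| := by
          congr 1; ring
      _ ≤ |HH α (n + 1) x - M * (e * T)| + |M * e * (T - s)| := abs_add_le _ _
      _ ≤ C * α * r ^ n * (e * T) + M * e * |T - s| := by
          rw [abs_mul (M * e), abs_of_pos (mul_pos hMpos hepos)]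
          gcongr
      _ ≤ C * α * r ^ n * (e * (r * (1 + 2 * K))) + r ^ n * e * (K * r * (2 * α)) := by
          gcongr
      _ = _ := by ring

noncomputable def FF (m P α : ℝ) : ℝ :=
  α * Real.exp (-α * m ^ 2) * (Real.exp (-α * P ^ 2) * HH α 4 P)

lemma FF_eq (m : ℝ) (p : ℤ) (α : ℝ) : α * Real.exp (-α * m ^ 2) *
            (∑' q : Fin 4 → ℤ,
              Real.exp (-α * ((p : ℝ) ^ 2 + (∑ i, (q i : ℝ) ^ 2)
                + ((p : ℝ) + ∑ i, (q i : ℝ)) ^ 2))) = FF m p α := by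
  rw [FF]
  congr 1
  rw [HH, ← tsum_mul_left]
  refine tsum_congr fun q => ?_
  rw [← Real.exp_add]; congr 1; ring

lemma FF_bound (m P : ℝ) : ∃ D : ℝ, 0 ≤ D ∧ ∀ α : ℝ, 0 < α → α ≤ 1 →
    |FF m P α - Real.pi ^ 2 / Real.sqrt 5 * (1 / α)| ≤ D := by
  obtain ⟨C, hC, h⟩ := HH_bound 4
  set A := Real.pi ^ 2 / Real.sqrt 5 with hA
  have hA0 : 0 ≤ A := by positivity
  set B := m ^ 2 + P ^ 2 + P ^ 2 / 5 with hB
  have hB0 : 0 ≤ B := by positivity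
  refine ⟨C * Real.pi ^ 2 + A * B, by positivity, fun α hα hα1 => ?_⟩
  have h1 := h α hα hα1 P
  have hr : Real.sqrt (Real.pi / α) ^ 4 = Real.pi ^ 2 / α ^ 2 := by
    rw [show (4:ℕ) = 2 * 2 by norm_num, pow_mul, Real.sq_sqrt (by positivity)]
    ring
  have h5 : ((4:ℕ):ℝ) + 1 = 5 := by norm_num
  rw [h5, hr] at h1
  set G := Real.exp (-α * P ^ 2 / 5)
  set E := Real.exp (-α * m ^ 2) * Real.exp (-α * P ^ 2) with hE
  have hE0 : 0 < E := by positivity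
  have hE1 : E ≤ 1 := by
    rw [hE, ← Real.exp_add]; apply Real.exp_le_one_iff.mpr
    nlinarith [mul_nonneg hα.le (sq_nonneg m), mul_nonneg hα.le (sq_nonneg P)]
  have hG1 : G ≤ 1 := by
    apply Real.exp_le_one_iff.mpr
    nlinarith [mul_nonneg hα.le (sq_nonneg P)]
  have hEG : E * G = Real.exp (-(α * B)) := by
    rw [hE, ← Real.exp_add, ← Real.exp_add]; congr 1; rw [hB]; ring
  have hEG1 : |E * G - 1| ≤ α * B := by
    rw [hEG, abs_le]
    constructor
    · linarith [Real.add_one_le_exp (-(α * B))]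
    · have : Real.exp (-(α * B)) ≤ 1 := Real.exp_le_one_iff.mpr (by nlinarith)
      nlinarith
  have hsplit : FF m P α - A * (1 / α) =
      α * E * (HH α 4 P - Real.pi ^ 2 / α ^ 2 / Real.sqrt 5 * G) + A * (1 / α) * (E * G - 1) := by
    rw [FF, hA, hE]
    have : Real.sqrt 5 ≠ 0 := by positivity
    field_simp
    ring
  rw [hsplit]
  refine (abs_add_le _ _).trans (add_le_add ?_ ?_)
  · rw [abs_mul, abs_of_pos (mul_pos hα hE0)]
    calc α * E * _ ≤ α * 1 * (C * α * (Real.pi ^ 2 / α ^ 2) * 1) := by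
          gcongr
          exact h1.trans (by gcongr)
      _ = _ := by field_simp
  · rw [abs_mul, abs_of_nonneg (by positivity)]
    calc _ ≤ A * (1 / α) * (α * B) := by gcongr
      _ = _ := by field_simp

lemma HH_anti (n : ℕ) (x : ℝ) : AntitoneOn (fun α => HH α n x) (Set.Ioi 0) := by
  intro a ha b hb hab
  refine (summable_HH hb n x).tsum_le_tsum (fun q => ?_) (summable_HH ha n x)
  apply Real.exp_le_exp.mpr
  have : 0 ≤ (∑ i, (q i : ℝ) ^ 2) + (x + ∑ i, (q i : ℝ)) ^ 2 := by positivity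
  nlinarith

lemma FF_meas (m P : ℝ) : AEStronglyMeasurable (FF m P) (volume.restrict (Set.Ioi 0)) := by
  have h1 : AEMeasurable (fun α => HH α 4 P) (volume.restrict (Set.Ioi 0)) :=
    aemeasurable_restrict_of_antitoneOn measurableSet_Ioi (HH_anti 4 P)
  have h2 : AEMeasurable (FF m P) (volume.restrict (Set.Ioi 0)) := by
    unfold FF
    fun_prop
  exact h2.aestronglyMeasurable

lemma FF_int_Ioi (m : ℝ) (hm : 0 < m) (P : ℝ) : IntegrableOn (FF m P) (Set.Ioi 1) := by
  have h1 : IntegrableOn (fun x : ℝ => x * Real.exp (-m ^ 2 * x)) (Set.Ioi 0) := by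
    have := integrableOn_rpow_mul_exp_neg_mul_rpow (p := 1) (s := 1) (b := m ^ 2)
      (by norm_num) (by norm_num) (by positivity)
    simpa using this
  have h2 : IntegrableOn (fun x : ℝ => (x * Real.exp (-m ^ 2 * x)) * HH 1 4 P) (Set.Ioi 1) :=
    (h1.mono_set (Set.Ioi_subset_Ioi zero_le_one)).mul_const _
  refine Integrable.mono' h2
    ((FF_meas m P).mono_measure (Measure.restrict_mono (Set.Ioi_subset_Ioi zero_le_one) le_rfl)) ?_
  refine (ae_restrict_iff' measurableSet_Ioi).mpr (Filter.Eventually.of_forall fun x hx => ?_)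
  have hx1 : (1:ℝ) < x := hx
  have hx0 : (0:ℝ) < x := by linarith
  have h3 : HH x 4 P ≤ HH 1 4 P := HH_anti 4 P (by simp) hx0 hx1.le
  have h4 := HH_nonneg x 4 P
  have h5 : Real.exp (-x * P ^ 2) ≤ 1 := Real.exp_le_one_iff.mpr (by nlinarith [mul_nonneg hx0.le (sq_nonneg P)])
  rw [Real.norm_of_nonneg (by unfold FF; positivity), FF]
  have h6 : -x * m ^ 2 = -m ^ 2 * x := by ring
  rw [h6]
  gcongr
  calc _ ≤ 1 * HH x 4 P := by gcongr
    _ ≤ _ := by rwa [one_mul]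

end FourPt

/-- Asymptotic expansion, in the Schwinger-parametric cutoff `Λ`, of the one-loop melonic
four-point bubble of the rank-6 quartic U(1) TGFT with closure constraint: it diverges
logarithmically with coefficient `2π²/√5`. -/
theorem one_loop_four_point_asymptotics (m : ℝ) (hm : 0 < m) (p : ℤ) :
    ∃ C : ℝ, 0 < C ∧ ∀ Λ : ℝ, 2 ≤ Λ →
      |(∫ α in Set.Ioi (1 / Λ ^ 2),
          α * Real.exp (-α * m ^ 2) *
            (∑' q : Fin 4 → ℤ,
              Real.exp (-α * ((p : ℝ) ^ 2 + (∑ i, (q i : ℝ) ^ 2)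
                + ((p : ℝ) + ∑ i, (q i : ℝ)) ^ 2))))
        - (2 * Real.pi ^ 2 / Real.sqrt 5) * Real.log Λ| ≤ C := by
  simp_rw [FourPt.FF_eq]
  obtain ⟨D, hD, hb⟩ := FourPt.FF_bound m p
  have hI := FourPt.FF_int_Ioi m hm p
  refine ⟨D + |∫ α in Set.Ioi 1, FourPt.FF m p α| + 1, by positivity, fun Λ hΛ => ?_⟩
  have hΛ0 : (0:ℝ) < Λ := by linarith
  set ε := 1 / Λ ^ 2 with hε
  have hε0 : 0 < ε := by positivity
  have hε1 : ε ≤ 1 := by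
    rw [hε, div_le_one (by positivity)]; nlinarith
  set A := Real.pi ^ 2 / Real.sqrt 5 with hA
  have hfin : volume (Set.Ioc ε 1) < ⊤ := measure_Ioc_lt_top
  have hg : IntegrableOn (fun α : ℝ => A * (1 / α)) (Set.Ioc ε 1) := by
    have : ContinuousOn (fun α : ℝ => A * (1 / α)) (Set.Icc ε 1) := by
      apply ContinuousOn.mul continuousOn_const
      apply ContinuousOn.div continuousOn_const continuousOn_id
      intro x hx; have := hx.1; simp only [id]; linarith
    exact this.integrableOn_Icc.mono_set Set.Ioc_subset_Icc_self
  have hsub : Set.Ioc ε 1 ⊆ Set.Ioi (0:ℝ) := fun x hx => hε0.trans hx.1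
  have hbd : ∀ x ∈ Set.Ioc ε 1, ‖FourPt.FF m p x - A * (1 / x)‖ ≤ D := fun x hx =>
    hb x (hsub hx) hx.2
  have hd : IntegrableOn (fun α : ℝ => FourPt.FF m p α - A * (1 / α)) (Set.Ioc ε 1) := by
    haveI : IsFiniteMeasure (volume.restrict (Set.Ioc ε 1)) := ⟨by simpa using hfin⟩
    refine Integrable.of_bound (C := D) ?_ ?_
    · exact (((FourPt.FF_meas m p).mono_measure (Measure.restrict_mono hsub le_rfl))).sub
        hg.aestronglyMeasurable
    · exact (ae_restrict_iff' measurableSet_Ioc).mpr (Filter.Eventually.of_forall hbd)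
  have hF : IntegrableOn (FourPt.FF m p) (Set.Ioc ε 1) := by
    have := hd.add hg
    refine this.congr (Filter.Eventually.of_forall fun x => ?_)
    simp
  have hgi : ∫ α in Set.Ioc ε 1, A * (1 / α) = A * (2 * Real.log Λ) := by
    rw [← intervalIntegral.integral_of_le hε1, intervalIntegral.integral_const_mul,
      integral_one_div (by rw [Set.uIcc_of_le hε1]; intro h; linarith [h.1])]
    rw [hε]; congr 1
    rw [one_div_one_div, Real.log_pow]; norm_num
  have hdi := norm_setIntegral_le_of_norm_le_const hfin hbd
  rw [integral_sub hF hg, hgi, Real.norm_eq_abs] at hdi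
  have hvol : volume.real (Set.Ioc ε 1) ≤ 1 := by
    rw [Real.volume_real_Ioc_of_le hε1]; linarith
  have hun : Set.Ioi ε = Set.Ioc ε 1 ∪ Set.Ioi 1 := (Set.Ioc_union_Ioi_eq_Ioi hε1).symm
  rw [hun, setIntegral_union (Set.Ioc_disjoint_Ioi le_rfl) measurableSet_Ioi hF hI]
  have h9 : 2 * Real.pi ^ 2 / Real.sqrt 5 * Real.log Λ = A * (2 * Real.log Λ) := by
    rw [hA]; ring
  rw [h9]
  have h10 : D * volume.real (Set.Ioc ε 1) ≤ D := by nlinarith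
  set X := ∫ α in Set.Ioc ε 1, FourPt.FF m p α
  set Y := ∫ α in Set.Ioi 1, FourPt.FF m p α
  have h11 : X + Y - A * (2 * Real.log Λ) = (X - A * (2 * Real.log Λ)) + Y := by ring
  rw [h11]
  refine (abs_add_le _ _).trans ?_
  linarith
end
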